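/- Fix a depth parameter s ≥ 0 and let P_s denote the depth-s truncated switch distribution. Then for every stationary ergodic probability measure Q on Ω = {1,...,D}^ℤ, Q-almost surely lim_{n→∞} (1/n)·(−log P_s(X_1^n)) = lim_{n→∞} (1/n)·(−log B(X_{s+1}^n|X_1^s, s)) = E_Q[−log Q(X_{s+1}|X_1^s)], where Q(X_{s+1}|X_1^s) = Q(X_1^{s+1})/Q(X_1^s) evaluated at the sample path. -/

import Mathlib

open Filter MeasureTheory
open scoped Topology

/-- Number of occurrences `c(w|z)` of `w` as a substring of `z`. -/
def cnt {D : ℕ} (w z : List (Fin D)) : ℕ :=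
  ((List.range (z.length - w.length + 1)).filter
    (fun i => (z.drop i).take w.length = w)).length

/-- Count `c(w | z_1^{m-1})` of `w` in the string `z` with its last symbol removed,
with the convention that counting in a block of length `-1` (i.e. when `z` itself is
empty) gives `0`. -/
def cntPred {D : ℕ} (w z : List (Fin D)) : ℕ :=
  if z = [] then 0 else cnt w z.dropLast

/-- The prefix `x_1^n` of the one-sided sequence `x` (0-indexed: `x i = x_{i+1}`). -/
def pref {D : ℕ} (x : ℕ → Fin D) (n : ℕ) : List (Fin D) :=
  (List.range n).map x

/-- Adaptive Markov predictor: the natural-number index corresponds to the Markov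
order shifted by one, so `Bpred D xs a (k+1) = B(a | xs, k)` and
`Bpred D xs a 0 = B(a | xs, -1) = 1/D`, where
`B(x_{n+1}|x_1^n, k) = (c(x_{n+1-k}^{n+1}|x_1^n) + B(x_{n+1}|x_1^n, k-1)) /
(c(x_{n+1-k}^{n}|x_1^{n-1}) + 1)`.  Counts of substrings whose indices fall outside
the string are taken to be zero. -/
noncomputable def Bpred (D : ℕ) (xs : List (Fin D)) (a : Fin D) : ℕ → ℝ
  | 0 => 1 / D
  | k + 1 =>
    if k ≤ xs.length then
      ((cnt (xs.drop (xs.length - k) ++ [a]) xs : ℝ) + Bpred D xs a k) /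
      ((cntPred (xs.drop (xs.length - k)) xs : ℝ) + 1)
    else Bpred D xs a k

/-- Partial depth-`s` truncated switch distribution `P_s(x_1^n, k)`, nonzero only for
`-1 ≤ k ≤ min(n-1, s)`. -/
noncomputable def PpartT (D : ℕ) (p : ℕ → ℝ) (s : ℕ) (x : ℕ → Fin D) : ℕ → ℤ → ℝ
  | 0, _ => 0
  | 1, k =>
    if k = -1 then p 0 * Bpred D [] (x 0) 0
    else if k = 0 then (1 - p 0) * Bpred D [] (x 0) 1
    else 0
  | n + 2, k =>
    if -1 ≤ k ∧ k ≤ min ((n : ℤ) + 1) (s : ℤ) then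
      (p (n + 1) * PpartT D p s x (n + 1) k +
        (1 - p (n + 1)) * PpartT D p s x (n + 1) (k - 1)) *
        Bpred D (pref x (n + 1)) (x (n + 1)) (k + 1).toNat
    else 0

/-- The dummy component `P_s(x_1^n, •)` of the depth-`s` truncated switch distribution:
`P_s(x_1^n, •) = 0` for `n < s + 2` and
`P_s(x_1^{n+1}, •) = [P_s(x_1^n, •) + (1-p_n) P_s(x_1^n, s)] B(x_{n+1}|x_1^n, s)`
for `n ≥ s + 1`. -/
noncomputable def PbulT (D : ℕ) (p : ℕ → ℝ) (s : ℕ) (x : ℕ → Fin D) : ℕ → ℝ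
  | 0 => 0
  | m + 1 =>
    if s + 1 ≤ m then
      (PbulT D p s x m + (1 - p m) * PpartT D p s x m (s : ℤ)) *
        Bpred D (pref x m) (x m) (s + 1)
    else 0

/-- The depth-`s` truncated switch distribution
`P_s(x_1^n) = Σ_{k=-1}^{s} P_s(x_1^n, k) + P_s(x_1^n, •)`. -/
noncomputable def PsT (D : ℕ) (p : ℕ → ℝ) (s : ℕ) (x : ℕ → Fin D) (n : ℕ) : ℝ :=
  (∑ kk ∈ Finset.range (s + 2), PpartT D p s x n ((kk : ℤ) - 1)) + PbulT D p s x n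

/-- The two-sided sequence space `Ω = {1,...,D}^ℤ` with the product σ-algebra. -/
abbrev Omega (D : ℕ) := ℤ → Fin D

/-- The shift `T : Ω → Ω`. -/
def shiftT (D : ℕ) : Omega D → Omega D := fun ω i => ω (i + 1)

/-- The cylinder set `{X_1 = x 0, ..., X_n = x (n-1)}`. -/
def cylSet (D : ℕ) (x : ℕ → Fin D) (n : ℕ) : Set (Omega D) :=
  {ω | ∀ i < n, ω ((i : ℤ) + 1) = x i}

/-- The one-sided sample path `X_1, X_2, ...` of `ω` (0-indexed). -/
def path (D : ℕ) (ω : Omega D) : ℕ → Fin D := fun i => ω ((i : ℤ) + 1)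

/-- The cylinder probability `Q(x_1^n)`. -/
noncomputable def Qstr (D : ℕ) (Q : Measure (Omega D)) (x : ℕ → Fin D) (n : ℕ) : ℝ :=
  (Q (cylSet D x n)).toReal

set_option linter.unusedSectionVars false
section Birk
variable {α : Type*} [MeasurableSpace α]

lemma bk_meas {T : α → α} (hT : Measurable T) {f : α → ℝ} (hf : Measurable f) (n : ℕ) :
    Measurable (birkhoffSum T f n) := by
  unfold birkhoffSum
  exact Finset.measurable_fun_sum _ (fun i _ => hf.comp (hT.iterate i))

noncomputable def bkM (T : α → α) (f : α → ℝ) : ℕ → α → ℝ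
  | 0 => fun _ => 0
  | n + 1 => fun x => max 0 (f x + bkM T f n (T x))

lemma bkM_nonneg (T : α → α) (f : α → ℝ) (n : ℕ) (x : α) : 0 ≤ bkM T f n x := by
  cases n <;> simp [bkM]

lemma bkM_mono (T : α → α) (f : α → ℝ) (n : ℕ) (x : α) : bkM T f n x ≤ bkM T f (n+1) x := by
  induction n generalizing x with
  | zero => simp [bkM]
  | succ n ih =>
    rw [bkM, bkM]
    exact max_le_max le_rfl (by linarith [ih (T x)])

lemma bk_le_bkM (T : α → α) (f : α → ℝ) (n : ℕ) (x : α) : birkhoffSum T f n x ≤ bkM T f n x := by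
  induction n generalizing x with
  | zero => simp [bkM]
  | succ n ih =>
    rw [birkhoffSum_succ', bkM]
    exact le_max_of_le_right (by linarith [ih (T x)])

lemma bkM_integrable {μ : Measure α} [IsProbabilityMeasure μ] {T : α → α}
    (hT : MeasurePreserving T μ μ) {f : α → ℝ} (hf : Integrable f μ) (n : ℕ) :
    Integrable (bkM T f n) μ := by
  induction n with
  | zero => simp [bkM]
  | succ n ih =>
    have h1 : Integrable (fun x => f x + bkM T f n (T x)) μ :=
      hf.add (hT.integrable_comp_of_integrable ih)
    have h2 := (integrable_zero α ℝ μ).sup h1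
    exact h2

lemma bk_key {μ : Measure α} [IsProbabilityMeasure μ] {T : α → α} (hT : Ergodic T μ)
    {f : α → ℝ} (hfm : Measurable f) (hf : Integrable f μ) (hneg : ∫ x, f x ∂μ < 0) :
    ∀ᵐ x ∂μ, ∃ C : ℕ, ∀ n, birkhoffSum T f n x ≤ C := by
  set A : Set α := {x | ∀ C : ℕ, ∃ n, (C : ℝ) < birkhoffSum T f n x} with hA
  have hAm : MeasurableSet A := by
    have : A = ⋂ C : ℕ, ⋃ n, {x | (C : ℝ) < birkhoffSum T f n x} := by
      ext x; simp [hA]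
    rw [this]
    exact MeasurableSet.iInter fun C => MeasurableSet.iUnion fun n =>
      measurableSet_lt measurable_const (bk_meas hT.measurable hfm n)
  have hinv : T ⁻¹' A = A := by
    ext x
    simp only [hA, Set.mem_preimage, Set.mem_ofPred_eq]
    constructor
    · intro h C
      obtain ⟨C', hC'⟩ := exists_nat_ge ((C:ℝ) - f x)
      obtain ⟨n, hn⟩ := h C'
      exact ⟨n+1, by rw [birkhoffSum_succ']; linarith⟩
    · intro h C
      obtain ⟨C', hC'⟩ := exists_nat_ge ((C:ℝ) + f x)
      obtain ⟨n, hn⟩ := h C'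
      rcases n with _ | n
      · simp at hn
        have : (0:ℝ) ≤ C' := Nat.cast_nonneg _
        linarith
      · rw [birkhoffSum_succ'] at hn
        exact ⟨n, by linarith⟩
  rcases hT.toPreErgodic.measure_self_or_compl_eq_zero hAm hinv with h0 | h1
  · have : ∀ᵐ x ∂μ, x ∉ A := by
      rw [ae_iff]; simpa using h0
    filter_upwards [this] with x hx
    simpa [hA] using hx
  · exfalso
    have hall : ∀ᵐ x ∂μ, x ∈ A := by
      rw [ae_iff]; exact h1
    have hlim : Tendsto (fun n => ∫ x, (bkM T f (n+1) x - bkM T f n (T x)) ∂μ) atTop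
        (𝓝 (∫ x, f x ∂μ)) := by
      refine tendsto_integral_of_dominated_convergence (fun x => |f x|) ?_ hf.abs ?_ ?_
      · intro n
        exact ((bkM_integrable hT.toMeasurePreserving hf (n+1)).sub
          (hT.toMeasurePreserving.integrable_comp_of_integrable (bkM_integrable hT.toMeasurePreserving hf n))).aestronglyMeasurable
      · intro n
        filter_upwards with x
        have := bkM_nonneg T f n (T x)
        rw [bkM, Real.norm_eq_abs]
        beta_reduce
        rcases max_cases 0 (f x + bkM T f n (T x)) with ⟨h, h'⟩ | ⟨h, h'⟩ <;> rw [h]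
        · rw [abs_le]
          constructor <;> cases abs_cases (f x) <;> linarith
        · simp
      · filter_upwards [hall] with x hx
        have hx' : T x ∈ A := by rw [← Set.mem_preimage, hinv]; exact hx
        obtain ⟨C, hC⟩ := exists_nat_ge (- f x)
        obtain ⟨N, hN⟩ := hx' C
        refine tendsto_const_nhds.congr' ?_
        filter_upwards [eventually_ge_atTop N] with n hn
        have h1 := bk_le_bkM T f N (T x)
        have h2 : bkM T f N (T x) ≤ bkM T f n (T x) :=
          monotone_nat_of_le_succ (fun n => bkM_mono T f n (T x)) hn
        rw [bkM]
        beta_reduce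
        rw [max_eq_right (by linarith)]
        ring
    have hge : 0 ≤ ∫ x, f x ∂μ := by
      refine ge_of_tendsto' hlim fun n => ?_
      have i1 := bkM_integrable hT.toMeasurePreserving hf (n+1)
      have i0 := bkM_integrable hT.toMeasurePreserving hf n
      have i2 : Integrable (fun x => bkM T f n (T x)) μ := hT.toMeasurePreserving.integrable_comp_of_integrable i0
      have e : ∫ x, bkM T f n (T x) ∂μ = ∫ x, bkM T f n x ∂μ := by
        rw [← integral_map hT.measurable.aemeasurable, hT.map_eq]
        rw [hT.map_eq]; exact i0.aestronglyMeasurable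
      rw [integral_sub i1 i2, e, sub_nonneg]
      exact integral_mono i0 i1 (fun x => bkM_mono T f n x)
    linarith

lemma bk_upper {μ : Measure α} [IsProbabilityMeasure μ] {T : α → α} (hT : Ergodic T μ)
    {f : α → ℝ} (hfm : Measurable f) (hf : Integrable f μ) :
    ∀ᵐ x ∂μ, ∀ j : ℕ, ∀ᶠ n : ℕ in atTop,
      birkhoffSum T f n x / n ≤ ∫ x, f x ∂μ + 1 / ((j:ℝ) + 1) := by
  rw [ae_all_iff]
  intro j
  set a := ∫ x, f x ∂μ with ha
  set e : ℝ := 1 / ((j:ℝ)+1) with he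
  have hepos : 0 < e := Nat.one_div_pos_of_nat
  have := bk_key hT (f := fun x => f x - (a + e/2)) (hfm.sub_const _) (hf.sub (integrable_const _)) (by
    rw [integral_sub hf (integrable_const _)]; simp; linarith)
  filter_upwards [this] with x hx
  obtain ⟨C, hC⟩ := hx
  have hlim : Tendsto (fun n : ℕ => (C:ℝ) / n) atTop (𝓝 0) := tendsto_const_div_atTop_nhds_zero_nat _
  filter_upwards [hlim.eventually (gt_mem_nhds (half_pos hepos)), eventually_gt_atTop 0] with n hn hn0
  have h := hC n
  have hn0' : (0:ℝ) < n := by exact_mod_cast hn0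
  have e1 : birkhoffSum T (fun x => f x - (a + e/2)) n x = birkhoffSum T f n x - n * (a + e/2) := by
    simp [birkhoffSum, Finset.sum_sub_distrib]; ring
  rw [e1] at h
  rw [div_lt_iff₀ hn0'] at hn
  rw [div_le_iff₀ hn0']
  nlinarith

theorem bk_main {μ : Measure α} [IsProbabilityMeasure μ] {T : α → α} (hT : Ergodic T μ)
    {f : α → ℝ} (hfm : Measurable f) (hf : Integrable f μ) :
    ∀ᵐ x ∂μ, Tendsto (fun n : ℕ => birkhoffSum T f n x / n) atTop (𝓝 (∫ x, f x ∂μ)) := by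
  filter_upwards [bk_upper hT hfm hf, bk_upper hT hfm.neg hf.neg] with x h1 h2
  rw [Metric.tendsto_nhds]
  intro ε hε
  obtain ⟨j, hj⟩ := exists_nat_one_div_lt hε
  filter_upwards [h1 j, h2 j] with n a b
  have e1 : birkhoffSum T (-f) n x = - birkhoffSum T f n x := by
    simp [birkhoffSum]
  have e2 : ∫ x, (-f) x ∂μ = - ∫ x, f x ∂μ := by
    simp [integral_neg]
  rw [e1, e2, neg_div] at b
  rw [Real.dist_eq, abs_lt]
  constructor <;> linarith
end Birk
section Comb
variable {D : ℕ}

lemma pref_length (x : ℕ → Fin D) (n : ℕ) : (pref x n).length = n := by simp [pref]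

lemma pref_succ (x : ℕ → Fin D) (n : ℕ) : pref x (n+1) = pref x n ++ [x n] := by
  simp [pref, List.range_succ]

lemma pref_succ' (x : ℕ → Fin D) (n : ℕ) : pref x (n+1) = x 0 :: pref (fun j => x (j+1)) n := by
  simp [pref, List.range_succ_eq_map, Function.comp_def]

lemma pref_dropLast (x : ℕ → Fin D) (n : ℕ) : (pref x n).dropLast = pref x (n-1) := by
  cases n with
  | zero => simp [pref]
  | succ n => rw [pref_succ]; simp

lemma pref_take_drop (x : ℕ → Fin D) (i k n : ℕ) (h : i + k ≤ n) :
    ((pref x n).drop i).take k = pref (fun j => x (i + j)) k := by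
  apply List.ext_getElem
  · simp [pref]; omega
  · intro j h1 h2
    simp [pref]

lemma pref_drop (x : ℕ → Fin D) (k n : ℕ) (h : k ≤ n) :
    (pref x n).drop (n - k) = pref (fun j => x (n - k + j)) k := by
  rw [← pref_take_drop x (n-k) k n (by omega), List.take_of_length_le]
  simp [pref]; omega

lemma pref_eq_ofFn (x : ℕ → Fin D) (n : ℕ) : pref x n = List.ofFn (fun i : Fin n => x i) := by
  apply List.ext_getElem
  · simp [pref]
  · intro j h1 h2
    simp [pref]

lemma filt_sum (P : ℕ → Prop) [DecidablePred P] (N : ℕ) :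
    (((List.range N).filter (fun i => P i)).length : ℝ) =
      ∑ i ∈ Finset.range N, if P i then (1:ℝ) else 0 := by
  induction N with
  | zero => simp
  | succ N ih =>
    rw [List.range_succ, List.filter_append, List.length_append, Finset.sum_range_succ]
    push_cast
    rw [ih]
    by_cases h : P N <;> simp [h]

lemma cnt_of_gt (w z : List (Fin D)) (h : z.length < w.length) : cnt w z = 0 := by
  unfold cnt
  rw [List.length_eq_zero_iff, List.filter_eq_nil_iff]
  intro i _ hi
  have := of_decide_eq_true hi
  have := congrArg List.length this
  simp at this
  omega

lemma cnt_append_le (v z : List (Fin D)) (a : Fin D) : cnt (v ++ [a]) z ≤ cntPred v z := by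
  by_cases hl : z.length < (v ++ [a]).length
  · rw [cnt_of_gt _ _ hl]; exact Nat.zero_le _
  · have hl' : v.length + 1 ≤ z.length := by simpa using hl
    have hz : z ≠ [] := by rintro rfl; simp at hl'
    unfold cntPred
    rw [if_neg hz]
    unfold cnt
    have e : z.length - (v ++ [a]).length + 1 = z.dropLast.length - v.length + 1 := by simp; omega
    rw [e, ← List.countP_eq_length_filter, ← List.countP_eq_length_filter]
    apply List.countP_mono_left
    intro i hi hd
    have hi' := List.mem_range.1 hi
    simp only [decide_eq_true_eq, List.length_append, List.length_singleton] at hd ⊢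
    have h2 := congrArg (List.take v.length) hd
    rw [List.take_take, List.take_left' rfl] at h2
    rw [List.dropLast_eq_take, List.drop_take, List.take_take]
    rw [List.length_dropLast] at hi'
    convert h2 using 2
    omega

lemma Bpred_pos (hD : 2 ≤ D) (xs : List (Fin D)) (a : Fin D) (k : ℕ) : 0 < Bpred D xs a k := by
  induction k with
  | zero =>
    have : (0:ℝ) < D := by exact_mod_cast (by omega : 0 < D)
    simp only [Bpred]; positivity
  | succ k ih =>
    rw [Bpred]
    split_ifs
    · positivity
    · exact ih

lemma Bpred_le_one (hD : 2 ≤ D) (xs : List (Fin D)) (a : Fin D) (k : ℕ) : Bpred D xs a k ≤ 1 := by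
  induction k with
  | zero =>
    have : (1:ℝ) ≤ D := by exact_mod_cast (by omega : 1 ≤ D)
    simp only [Bpred]
    rw [div_le_one (by linarith)]; exact this
  | succ k ih =>
    rw [Bpred]
    split_ifs
    · rw [div_le_one (by positivity)]
      have := cnt_append_le (xs.drop (xs.length - k)) xs a
      have : ((cnt (xs.drop (xs.length - k) ++ [a]) xs : ℕ) : ℝ) ≤ (cntPred (xs.drop (xs.length - k)) xs : ℕ) := by
        exact_mod_cast this
      linarith
    · exact ih

lemma path_iter (ω : Omega D) (i j : ℕ) : path D ((shiftT D)^[i] ω) j = path D ω (i + j) := by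
  induction i generalizing ω with
  | zero => simp
  | succ i ih =>
    rw [Function.iterate_succ_apply, ih]
    simp only [path, shiftT]
    congr 1; push_cast; ring

lemma path_iter' (ω : Omega D) (i : ℕ) :
    path D ((shiftT D)^[i] ω) = fun j => path D ω (i + j) := funext (path_iter ω i)

/-- event that the path starts with `w` -/
def Ew (w : List (Fin D)) : Set (Omega D) := {ω | pref (path D ω) w.length = w}

lemma cnt_pref (w : List (Fin D)) (ω : Omega D) (n : ℕ) (h : w.length ≤ n) :
    (cnt w (pref (path D ω) n) : ℝ) =
      birkhoffSum (shiftT D) ((Ew w).indicator (fun _ => (1:ℝ))) (n - w.length + 1) ω := by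
  classical
  unfold cnt
  rw [filt_sum, pref_length, birkhoffSum]
  refine Finset.sum_congr rfl fun i hi => ?_
  have hi' := Finset.mem_range.1 hi
  rw [pref_take_drop _ _ _ _ (by omega), ← path_iter', Set.indicator_apply]
  exact if_congr Iff.rfl rfl rfl

lemma Bpred_pref (ω : Omega D) (k m : ℕ) (h : k ≤ m) (hm : 0 < m) :
    Bpred D (pref (path D ω) m) (path D ω m) (k+1) =
      ((cnt (pref (path D ((shiftT D)^[m-k] ω)) (k+1)) (pref (path D ω) m) : ℝ) +
        Bpred D (pref (path D ω) m) (path D ω m) k) /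
      ((cnt (pref (path D ((shiftT D)^[m-k] ω)) k) (pref (path D ω) (m-1)) : ℝ) + 1) := by
  rw [Bpred, pref_length, if_pos h, pref_drop _ _ _ h, pref_succ, path_iter', cntPred,
    if_neg, pref_dropLast]
  · beta_reduce
    rw [show m - k + k = m by omega]
  · intro h0
    have := congrArg List.length h0
    rw [pref_length] at this
    simp at this; omega
end Comb
section Ana
variable {D : ℕ}

lemma shift_div {u : ℕ → ℝ} {c : ℝ} (h : Tendsto (fun n : ℕ => u n / n) atTop (𝓝 c)) (a b : ℕ) :
    Tendsto (fun n : ℕ => u (n + a) / ((n + b : ℕ) : ℝ)) atTop (𝓝 c) := by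
  have h1 : Tendsto (fun n : ℕ => u (n + a) / ((n + a : ℕ) : ℝ)) atTop (𝓝 c) :=
    (tendsto_add_atTop_iff_nat (f := fun n : ℕ => u n / n) a).2 h
  have h2 : Tendsto (fun n : ℕ => 1 + ((a:ℝ) - b) / ((n + b : ℕ) : ℝ)) atTop (𝓝 (1 + 0)) := by
    refine tendsto_const_nhds.add ?_
    exact (tendsto_add_atTop_iff_nat (f := fun n : ℕ => ((a:ℝ) - b) / (n:ℝ)) b).2
      (tendsto_const_div_atTop_nhds_zero_nat _)
  have h3 := h1.mul h2
  rw [add_zero, mul_one] at h3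
  refine h3.congr' ?_
  filter_upwards [eventually_gt_atTop 0] with n hn
  have hn' : (0:ℝ) < n := by exact_mod_cast hn
  have ha : ((n + a : ℕ) : ℝ) ≠ 0 := by positivity
  have hb : ((n + b : ℕ) : ℝ) ≠ 0 := by positivity
  field_simp
  push_cast
  ring

lemma cesaro_shift {u v : ℕ → ℝ} {c : ℝ} (k : ℕ)
    (hd : Tendsto (fun m => u (m + k) - v m) atTop (𝓝 0))
    (hv : Tendsto (fun n : ℕ => (∑ m ∈ Finset.range n, v m) / n) atTop (𝓝 c)) :
    Tendsto (fun n : ℕ => (∑ m ∈ Finset.range n, u m) / n) atTop (𝓝 c) := by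
  have h1 := hd.cesaro
  have h2 : Tendsto (fun n : ℕ => (∑ m ∈ Finset.range n, u (m + k)) / n) atTop (𝓝 c) := by
    have := h1.add hv
    rw [zero_add] at this
    refine this.congr fun n => ?_
    rw [Finset.sum_sub_distrib]
    field_simp
    ring
  have h3 := shift_div h2 0 k
  have h4 : Tendsto (fun n : ℕ => (∑ m ∈ Finset.range k, u m) / ((n + k : ℕ) : ℝ)) atTop (𝓝 0) :=
    (tendsto_add_atTop_iff_nat (f := fun n : ℕ => (∑ m ∈ Finset.range k, u m) / (n:ℝ)) k).2
      (tendsto_const_div_atTop_nhds_zero_nat _)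
  have h5 := h4.add h3
  rw [zero_add] at h5
  rw [← tendsto_add_atTop_iff_nat k]
  refine h5.congr fun n => ?_
  rw [← add_div, add_zero, add_comm n k, Finset.sum_range_add]
  simp [add_comm]

lemma meas_shift : Measurable (shiftT D) := by
  unfold shiftT
  exact measurable_pi_lambda _ fun i => measurable_pi_apply _

/-- finite window map -/
def win (D n : ℕ) (ω : Omega D) : Fin n → Fin D := fun i => path D ω i

lemma meas_win (n : ℕ) : Measurable (win D n) :=
  measurable_pi_lambda _ fun i => measurable_pi_apply _

lemma pref_win (n : ℕ) (ω : Omega D) : pref (path D ω) n = List.ofFn (win D n ω) :=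
  pref_eq_ofFn _ _

lemma meas_F (F : List (Fin D) → ℝ) (n : ℕ) : Measurable (fun ω => F (pref (path D ω) n)) := by
  simp_rw [pref_win]
  exact (measurable_of_finite (fun u : Fin n → Fin D => F (List.ofFn u))).comp (meas_win n)

lemma meas_Ew (w : List (Fin D)) : MeasurableSet (Ew w) := by
  classical
  have : Ew w = (fun ω => (fun l => if l = w then (1:ℝ) else 0) (pref (path D ω) w.length)) ⁻¹' {1} := by
    ext ω
    simp [Ew]
  rw [this]
  exact meas_F (fun l => if l = w then (1:ℝ) else 0) _ (measurableSet_singleton _)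

noncomputable def mu (Q : Measure (Omega D)) (w : List (Fin D)) : ℝ := Q.real (Ew w)

lemma mu_nonneg (Q : Measure (Omega D)) (w : List (Fin D)) : 0 ≤ mu Q w := measureReal_nonneg

lemma Qstr_eq (Q : Measure (Omega D)) (x : ℕ → Fin D) (n : ℕ) : Qstr D Q x n = mu Q (pref x n) := by
  unfold Qstr mu Measure.real Ew cylSet
  congr 2
  ext ω
  rw [Set.mem_ofPred_eq, Set.mem_ofPred_eq, pref_length]
  simp only [pref]
  rw [List.map_inj_left]
  simp [path]

lemma integ_F (Q : Measure (Omega D)) [IsProbabilityMeasure Q] (F : List (Fin D) → ℝ) (n : ℕ) :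
    Integrable (fun ω => F (pref (path D ω) n)) Q := by
  refine Integrable.of_bound (meas_F F n).aestronglyMeasurable
    (∑ u : Fin n → Fin D, |F (List.ofFn u)|) (Filter.Eventually.of_forall fun ω => ?_)
  rw [pref_win, Real.norm_eq_abs]
  exact Finset.single_le_sum (f := fun u : Fin n → Fin D => |F (List.ofFn u)|)
    (fun _ _ => abs_nonneg _) (Finset.mem_univ _)

lemma Ew_ofFn (n : ℕ) (u : Fin n → Fin D) : Ew (List.ofFn u) = win D n ⁻¹' {u} := by
  ext ω
  simp only [Ew, Set.mem_ofPred_eq, List.length_ofFn, Set.mem_preimage, Set.mem_singleton_iff]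
  rw [pref_win, List.ofFn_inj]

lemma integral_F (Q : Measure (Omega D)) [IsProbabilityMeasure Q] (F : List (Fin D) → ℝ) (n : ℕ) :
    ∫ ω, F (pref (path D ω) n) ∂Q = ∑ u : Fin n → Fin D, mu Q (List.ofFn u) * F (List.ofFn u) := by
  have : IsProbabilityMeasure (Q.map (win D n)) :=
    Measure.isProbabilityMeasure_map (meas_win n).aemeasurable
  simp_rw [pref_win]
  rw [← integral_map (μ := Q) (φ := win D n) (f := fun u => F (List.ofFn u)) (meas_win n).aemeasurable
    (measurable_of_finite _).aestronglyMeasurable, integral_fintype Integrable.of_finite]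
  refine Finset.sum_congr rfl fun u _ => ?_
  rw [smul_eq_mul, mu, Ew_ofFn, measureReal_def, measureReal_def,
    Measure.map_apply (meas_win n) (measurableSet_singleton _)]

lemma sum_mu (Q : Measure (Omega D)) [IsProbabilityMeasure Q] (n : ℕ) :
    ∑ u : Fin n → Fin D, mu Q (List.ofFn u) = 1 := by
  have := integral_F Q (fun _ => (1:ℝ)) n
  simpa using this.symm

lemma sum_cons (Q : Measure (Omega D)) [IsProbabilityMeasure Q]
    (hT : MeasurePreserving (shiftT D) Q Q) (w : List (Fin D)) :
    ∑ a : Fin D, mu Q (a :: w) = mu Q w := by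
  unfold mu
  rw [← measureReal_iUnion_fintype _ (fun a => meas_Ew _)]
  · rw [← hT.measureReal_preimage (meas_Ew w).nullMeasurableSet]
    congr 1
    ext ω
    simp only [Ew, Set.mem_iUnion, Set.mem_ofPred_eq, List.length_cons, pref_succ', Set.mem_preimage]
    have : path D (shiftT D ω) = fun j => path D ω (j+1) := by
      have := path_iter' ω 1
      simp only [Function.iterate_one] at this
      rw [this]; ext j; rw [add_comm]
    rw [this]
    simp
  · intro a b hab
    rw [Function.onFun, Set.disjoint_left]
    intro ω h1 h2
    simp only [Ew, Set.mem_ofPred_eq, List.length_cons, pref_succ', List.cons.injEq] at h1 h2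
    exact hab (h1.1.symm.trans h2.1)

lemma freq (Q : Measure (Omega D)) [IsProbabilityMeasure Q] (hT : Ergodic (shiftT D) Q) :
    ∀ᵐ ω ∂Q, ∀ w : List (Fin D),
      Tendsto (fun n : ℕ => (cnt w (pref (path D ω) n) : ℝ) / n) atTop (𝓝 (mu Q w)) := by
  rw [ae_all_iff]
  intro w
  have := bk_main hT (f := (Ew w).indicator (fun _ => (1:ℝ)))
    (measurable_const.indicator (meas_Ew w)) ((integrable_const _).indicator (meas_Ew w))
  filter_upwards [this] with ω h
  rw [integral_indicator_const _ (meas_Ew w), smul_eq_mul, mul_one] at h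
  have h2 := shift_div h 1 w.length
  rw [← tendsto_add_atTop_iff_nat w.length]
  refine h2.congr fun n => ?_
  rw [cnt_pref _ _ _ (by omega)]
  congr 2
  congr 1
  omega

lemma mu_pos_ae (Q : Measure (Omega D)) [IsProbabilityMeasure Q]
    (hT : MeasurePreserving (shiftT D) Q Q)  :
    ∀ᵐ ω ∂Q, ∀ i j : ℕ, 0 < mu Q (pref (path D ((shiftT D)^[i] ω)) j) := by
  rw [ae_all_iff]
  intro i
  rw [ae_all_iff]
  intro j
  have key : ∀ᵐ ω ∂Q, 0 < mu Q (pref (path D ω) j) := by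
    have : ∀ᵐ ω ∂Q, ∀ u : Fin j → Fin D, mu Q (List.ofFn u) = 0 → ω ∉ Ew (List.ofFn u) := by
      rw [ae_all_iff]
      intro u
      by_cases h : mu Q (List.ofFn u) = 0
      · have h' : Q (Ew (List.ofFn u)) = 0 := by
          unfold mu at h
          rwa [measureReal_eq_zero_iff] at h
        filter_upwards [measure_eq_zero_iff_ae_notMem.1 h'] with ω hω _ using hω
      · exact Filter.Eventually.of_forall fun ω h0 => absurd h0 h
    filter_upwards [this] with ω hω
    refine lt_of_le_of_ne (mu_nonneg _ _) fun h => ?_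
    rw [pref_win] at h
    refine hω _ h.symm ?_
    rw [Ew_ofFn]; rfl
  exact (hT.iterate i).quasiMeasurePreserving.ae key
end Ana
section Ent
variable {D : ℕ}

noncomputable def qF (Q : Measure (Omega D)) : ℕ → List (Fin D) → ℝ
  | 0, _ => 1 / D
  | _ + 1, w => mu Q w / mu Q w.dropLast

noncomputable def qq (Q : Measure (Omega D)) (k : ℕ) (ω : Omega D) : ℝ :=
  qF Q k (pref (path D ω) k)

noncomputable def hh (Q : Measure (Omega D)) (k : ℕ) : ℝ := ∫ ω, -Real.log (qq Q k ω) ∂Q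

lemma Blim (hD : 2 ≤ D) (Q : Measure (Omega D)) [IsProbabilityMeasure Q] (hT : Ergodic (shiftT D) Q)
    (k : ℕ) : ∀ᵐ ω ∂Q, Tendsto (fun n : ℕ => (∑ m ∈ Finset.range n,
      -Real.log (Bpred D (pref (path D ω) m) (path D ω m) k)) / n) atTop (𝓝 (hh Q k)) := by
  cases k with
  | zero =>
    refine Filter.Eventually.of_forall fun ω => ?_
    simp only [Bpred, hh, qq, qF, Finset.sum_const, Finset.card_range, integral_const, probReal_univ,
      one_smul, nsmul_eq_mul]
    refine tendsto_const_nhds.congr' ?_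
    filter_upwards [eventually_gt_atTop 0] with n hn
    have : (n:ℝ) ≠ 0 := by positivity
    field_simp
  | succ k =>
    have hb := bk_main hT (f := fun ω => -Real.log (qq Q (k+1) ω))
      (meas_F (fun l => -Real.log (qF Q (k+1) l)) (k+1))
      (integ_F Q (fun l => -Real.log (qF Q (k+1) l)) (k+1))
    filter_upwards [hb, freq Q hT, mu_pos_ae Q hT.toMeasurePreserving] with ω hω hfr hpos
    refine cesaro_shift k ?_ hω
    -- convergence for each word
    have hw : ∀ w : List (Fin D), 0 < mu Q w → 0 < mu Q w.dropLast →
        Tendsto (fun m : ℕ => Real.log (((cnt w (pref (path D ω) m) : ℝ) +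
          Bpred D (pref (path D ω) m) (path D ω m) k) /
          ((cnt w.dropLast (pref (path D ω) (m-1)) : ℝ) + 1)) - Real.log (qF Q (k+1) w))
          atTop (𝓝 0) := by
      intro w h1 h2
      have hq : 0 < qF Q (k+1) w := div_pos h1 h2
      have hone : Tendsto (fun m : ℕ => (1:ℝ) / m) atTop (𝓝 0) :=
        tendsto_const_div_atTop_nhds_zero_nat _
      have t1 : Tendsto (fun m : ℕ => Bpred D (pref (path D ω) m) (path D ω m) k / (m:ℝ))
          atTop (𝓝 0) := by
        refine squeeze_zero (fun m => div_nonneg (Bpred_pos hD _ _ _).le (Nat.cast_nonneg _))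
          (fun m => ?_) hone
        exact div_le_div_of_nonneg_right (Bpred_le_one hD _ _ _) (Nat.cast_nonneg _)
      have t2 : Tendsto (fun m : ℕ => (cnt w.dropLast (pref (path D ω) (m-1)) : ℝ) / m)
          atTop (𝓝 (mu Q w.dropLast)) := by
        rw [← tendsto_add_atTop_iff_nat 1]
        exact shift_div (hfr w.dropLast) 0 1
      have t3 := ((hfr w).add t1).div (t2.add hone) (by rw [add_zero]; exact h2.ne')
      rw [add_zero, add_zero] at t3
      have t4 : Tendsto (fun m : ℕ => (((cnt w (pref (path D ω) m) : ℝ) +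
          Bpred D (pref (path D ω) m) (path D ω m) k) /
          ((cnt w.dropLast (pref (path D ω) (m-1)) : ℝ) + 1))) atTop (𝓝 (qF Q (k+1) w)) := by
        refine t3.congr' ?_
        filter_upwards [eventually_gt_atTop 0] with m hm
        have hm' : (m:ℝ) ≠ 0 := by positivity
        simp only [Pi.div_apply]
        rw [← add_div, ← add_div, div_div_div_cancel_right₀ hm']
      have t5 := (t4.log hq.ne').sub_const (Real.log (qF Q (k+1) w))
      rwa [sub_self] at t5
    rw [Metric.tendsto_nhds]
    intro ε hε
    have hall : ∀ᶠ m : ℕ in atTop, ∀ u : Fin (k+1) → Fin D, 0 < mu Q (List.ofFn u) →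
        0 < mu Q (List.ofFn u).dropLast →
        |Real.log (((cnt (List.ofFn u) (pref (path D ω) m) : ℝ) +
          Bpred D (pref (path D ω) m) (path D ω m) k) /
          ((cnt (List.ofFn u).dropLast (pref (path D ω) (m-1)) : ℝ) + 1))
          - Real.log (qF Q (k+1) (List.ofFn u))| < ε := by
      rw [eventually_all]
      intro u
      by_cases h1 : 0 < mu Q (List.ofFn u) ∧ 0 < mu Q (List.ofFn u).dropLast
      · have := Metric.tendsto_nhds.1 (hw _ h1.1 h1.2) ε hε
        filter_upwards [this] with m hm _ _
        rwa [Real.dist_eq, sub_zero] at hm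
      · exact Filter.Eventually.of_forall fun m a b => absurd ⟨a, b⟩ h1
    have hall' := (tendsto_add_atTop_nat k).eventually hall
    filter_upwards [hall', eventually_gt_atTop 0] with m hm hm0
    have hdl : (pref (path D ((shiftT D)^[m] ω)) (k+1)).dropLast
        = pref (path D ((shiftT D)^[m] ω)) k := by rw [pref_dropLast]; rfl
    have := hm (win D (k+1) ((shiftT D)^[m] ω))
    rw [← pref_win, hdl] at this
    have := this (hpos _ _) (hpos _ _)
    rw [Bpred_pref ω k (m+k) (by omega) (by omega), show m + k - k = m by omega]
    rw [Real.dist_eq, sub_zero, qq, neg_sub_neg, abs_sub_comm]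
    exact this

lemma log_mono (Q : Measure (Omega D)) [IsProbabilityMeasure Q] (f g : Omega D → ℝ)
    (hf : ∀ᵐ ω ∂Q, 0 < f ω) (hg : ∀ᵐ ω ∂Q, 0 < g ω)
    (hfi : Integrable (fun ω => -Real.log (f ω)) Q) (hgi : Integrable (fun ω => -Real.log (g ω)) Q)
    (hfg : Integrable (fun ω => f ω / g ω) Q) (h1 : ∫ ω, f ω / g ω ∂Q ≤ 1) :
    ∫ ω, -Real.log (g ω) ∂Q ≤ ∫ ω, -Real.log (f ω) ∂Q := by
  have h2 : ∫ ω, (-Real.log (g ω) - -Real.log (f ω)) ∂Q ≤ ∫ ω, (f ω / g ω - 1) ∂Q := by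
    refine integral_mono_ae (hgi.sub hfi) (hfg.sub (integrable_const _)) ?_
    filter_upwards [hf, hg] with ω a b
    have := Real.log_le_sub_one_of_pos (div_pos a b)
    rw [Real.log_div a.ne' b.ne'] at this
    linarith
  rw [integral_sub hgi hfi, integral_sub hfg (integrable_const _)] at h2
  simp at h2
  linarith

lemma qq_pos (hD : 2 ≤ D) (Q : Measure (Omega D)) [IsProbabilityMeasure Q]
    (hT : MeasurePreserving (shiftT D) Q Q) (k : ℕ) : ∀ᵐ ω ∂Q, 0 < qq Q k ω := by
  filter_upwards [mu_pos_ae Q hT] with ω h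
  cases k with
  | zero =>
    have : (0:ℝ) < D := by exact_mod_cast (by omega : 0 < D)
    simp only [qq, qF]; positivity
  | succ k =>
    simp only [qq, qF]
    rw [pref_dropLast]
    exact div_pos (h 0 _) (h 0 _)

lemma hh_anti_zero (hD : 2 ≤ D) (Q : Measure (Omega D)) [IsProbabilityMeasure Q]
    (hT : MeasurePreserving (shiftT D) Q Q) : hh Q 1 ≤ hh Q 0 := by
  unfold hh
  have hi := fun k => integ_F Q (fun l => -Real.log (qF Q k l)) k
  refine log_mono Q _ _ (qq_pos hD Q hT 0) (qq_pos hD Q hT 1) (hi 0) (hi 1)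
    (integ_F Q (fun l => (1 / D : ℝ) / qF Q 1 l) 1) ?_
  have e := integral_F Q (fun l => (1 / D : ℝ) / qF Q 1 l) 1
  have e' : ∫ ω, qq Q 0 ω / qq Q 1 ω ∂Q
    = ∑ u : Fin 1 → Fin D, mu Q (List.ofFn u) * ((1 / D : ℝ) / qF Q 1 (List.ofFn u)) := e
  rw [e']
  have hD' : (0:ℝ) < D := by exact_mod_cast (by omega : 0 < D)
  calc _ ≤ ∑ u : Fin 1 → Fin D, (1 / D : ℝ) := by
        refine Finset.sum_le_sum fun u _ => ?_
        have hnil : mu Q [] = 1 := by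
          have := sum_mu Q 0
          simpa using this
        simp only [qF]
        have : (List.ofFn u).dropLast = [] := by simp
        rw [this, hnil, div_one]
        rcases (mu_nonneg Q (List.ofFn u)).eq_or_lt with h | h
        · rw [← h]; simp
        · rw [mul_div_cancel₀ _ h.ne']
    _ = 1 := by simp [hD'.ne']

lemma hh_anti_succ (hD : 2 ≤ D) (Q : Measure (Omega D)) [IsProbabilityMeasure Q]
    (hT : MeasurePreserving (shiftT D) Q Q) (k : ℕ) : hh Q (k+2) ≤ hh Q (k+1) := by
  have hi := fun k => integ_F Q (fun l => -Real.log (qF Q k l)) k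
  have hsh : hh Q (k+1) = ∫ ω, -Real.log (qq Q (k+1) (shiftT D ω)) ∂Q := by
    unfold hh
    have := integral_map (μ := Q) (φ := shiftT D) hT.measurable.aemeasurable
      (f := fun ω => -Real.log (qq Q (k+1) ω))
      (by rw [hT.map_eq]; exact (hi (k+1)).aestronglyMeasurable)
    rw [hT.map_eq] at this
    exact this
  have htail : ∀ ω, pref (path D (shiftT D ω)) (k+1) = (pref (path D ω) (k+2)).tail := by
    intro ω
    rw [pref_succ' _ (k+1), List.tail_cons]
    have := path_iter' ω 1
    simp only [Function.iterate_one] at this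
    rw [this]; simp_rw [add_comm]
  have hqs : ∀ ω, qq Q (k+1) (shiftT D ω) = qF Q (k+1) (pref (path D ω) (k+2)).tail := by
    intro ω; rw [qq, htail]
  rw [hsh]
  unfold hh
  refine log_mono Q _ _ (hT.quasiMeasurePreserving.ae (qq_pos hD Q hT (k+1))) (qq_pos hD Q hT (k+2)) ?_ (hi (k+2)) ?_ ?_
  · simp_rw [hqs]
    exact integ_F Q (fun l => -Real.log (qF Q (k+1) l.tail)) (k+2)
  · simp_rw [hqs]
    exact integ_F Q (fun l => qF Q (k+1) l.tail / qF Q (k+2) l) (k+2)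
  · simp_rw [hqs]
    have e : ∫ ω, qF Q (k+1) (pref (path D ω) (k+2)).tail / qq Q (k+2) ω ∂Q = _ :=
      integral_F Q (fun l => qF Q (k+1) l.tail / qF Q (k+2) l) (k+2)
    rw [e, ← (Fin.consEquiv (fun _ => Fin D)).sum_comp, Fintype.sum_prod_type, Finset.sum_comm]
    rw [← sum_mu Q (k+1)]
    refine Finset.sum_le_sum fun v _ => ?_
    have hc : ∀ a, List.ofFn ((Fin.consEquiv (fun _ : Fin (k+2) => Fin D)) (a, v)) = a :: List.ofFn v := by
      intro a
      simp [Fin.consEquiv, List.ofFn_succ]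
    simp_rw [hc, List.tail_cons, qF]
    have hne : List.ofFn v ≠ [] := by simp
    have hdl : ∀ a, (a :: List.ofFn v).dropLast = a :: (List.ofFn v).dropLast := by
      intro a; rw [List.dropLast_cons_of_ne_nil hne]
    simp_rw [hdl]
    calc _ ≤ ∑ a : Fin D, mu Q (List.ofFn v) / mu Q (List.ofFn v).dropLast *
          mu Q (a :: (List.ofFn v).dropLast) := by
          refine Finset.sum_le_sum fun a _ => ?_
          have n1 := mu_nonneg Q (List.ofFn v)
          have n2 := mu_nonneg Q (List.ofFn v).dropLast
          have n3 := mu_nonneg Q (a :: (List.ofFn v).dropLast)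
          rcases (mu_nonneg Q (a :: List.ofFn v)).eq_or_lt with h | h
          · rw [← h, zero_mul]; positivity
          · apply le_of_eq
            rw [div_div_eq_mul_div, mul_div_cancel₀ _ h.ne']
      _ = mu Q (List.ofFn v) / mu Q (List.ofFn v).dropLast * mu Q (List.ofFn v).dropLast := by
          rw [← Finset.mul_sum, sum_cons Q hT]
      _ ≤ _ := by
          rcases eq_or_ne (mu Q (List.ofFn v).dropLast) 0 with h | h
          · rw [h, mul_zero]; exact mu_nonneg _ _
          · rw [div_mul_cancel₀ _ h]

lemma hh_anti (hD : 2 ≤ D) (Q : Measure (Omega D)) [IsProbabilityMeasure Q]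
    (hT : MeasurePreserving (shiftT D) Q Q) : Antitone (hh Q) := by
  refine antitone_nat_of_succ_le fun k => ?_
  cases k with
  | zero => exact hh_anti_zero hD Q hT
  | succ k => exact hh_anti_succ hD Q hT k
end Ent
section Sw
variable {D : ℕ}

/-- exponential upper bound at rate `h` -/
def UB (f : ℕ → ℝ) (h : ℝ) : Prop :=
  ∀ ε > 0, ∃ C : ℝ, 0 < C ∧ ∀ n : ℕ, f n ≤ C * Real.exp (-(n * (h - ε)))

lemma prod_bounds (L : ℕ → ℝ) (h ε : ℝ) (hε : 0 < ε)
    (hL : Tendsto (fun n : ℕ => L n / n) atTop (𝓝 h)) :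
    ∃ K : ℝ, 0 ≤ K ∧ ∀ n : ℕ, |L n - n * h| ≤ K + n * ε := by
  have h1 := Metric.tendsto_nhds.1 hL ε hε
  obtain ⟨N, hN⟩ := eventually_atTop.1 h1
  refine ⟨∑ n ∈ Finset.range (N+1), |L n - n * h|, Finset.sum_nonneg fun _ _ => abs_nonneg _, fun n => ?_⟩
  by_cases hn : n < N + 1
  · have := Finset.single_le_sum (f := fun n : ℕ => |L n - n * h|) (fun _ _ => abs_nonneg _)
      (Finset.mem_range.2 hn)
    have h0 : (0:ℝ) ≤ n * ε := by positivity
    linarith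
  · have := hN n (by omega)
    have hn0 : (0:ℝ) < n := by exact_mod_cast (by omega : 0 < n)
    rw [Real.dist_eq] at this
    have e : L n - n * h = n * (L n / n - h) := by field_simp
    rw [e, abs_mul, abs_of_pos hn0]
    have : (n:ℝ) * |L n / n - h| ≤ n * ε := by gcongr
    have h2 : 0 ≤ ∑ n ∈ Finset.range (N+1), |L n - n * h| := Finset.sum_nonneg fun _ _ => abs_nonneg _
    linarith

lemma nat_le_exp (ε : ℝ) (hε : 0 < ε) (n : ℕ) : (n:ℝ) + 1 ≤ (1 + 1/ε) * Real.exp (n * ε) := by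
  have h := Real.add_one_le_exp (n * ε)
  have h1 : (1 + 1/ε) * (n * ε + 1) ≤ (1 + 1/ε) * Real.exp (n * ε) := by gcongr
  have : (1 + 1/ε) * (n * ε + 1) = n * ε + 1 + n + 1/ε := by field_simp; ring
  have : 0 < 1/ε := by positivity
  have : 0 ≤ n * ε := by positivity
  linarith

/-- discrete Gronwall -/
lemma UB_step (b f g : ℕ → ℝ) (h h' : ℝ) (hb : ∀ n, 0 < b n) (hg0 : ∀ n, 0 ≤ g n)
    (hrec : ∀ n, 1 ≤ n → f (n+1) ≤ (f n + g n) * b n)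
    (hlim : Tendsto (fun n : ℕ => (∑ m ∈ Finset.range n, -Real.log (b m)) / n) atTop (𝓝 h'))
    (hle : h ≤ h') (hg : UB g h) : UB f h := by
  intro ε hε
  set δ := ε / 4 with hδ
  have hδ0 : 0 < δ := by positivity
  obtain ⟨C, hC, hgC⟩ := hg δ hδ0
  set L : ℕ → ℝ := fun n => ∑ m ∈ Finset.range n, -Real.log (b m) with hLdef
  obtain ⟨K, hK0, hK⟩ := prod_bounds L h' δ hδ0 hlim
  have hLs : ∀ n, Real.exp (L n) = Real.exp (L (n+1)) * b n := by
    intro n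
    have : L (n+1) = L n + -Real.log (b n) := by simp only [hLdef, Finset.sum_range_succ]
    rw [this, Real.exp_add, Real.exp_neg, Real.exp_log (hb n)]
    have := (hb n).ne'
    field_simp
  -- A bounds f 0, f 1
  set A : ℝ := |f 1| * Real.exp (L 1) + C * Real.exp K with hA
  have hA0 : 0 < A := by positivity
  have hind : ∀ n : ℕ, 1 ≤ n → f n * Real.exp (L n) ≤ A * n * Real.exp (n * (h' - h + 2 * δ)) := by
    intro n hn
    induction n, hn using Nat.le_induction with
    | base =>
      have : 1 ≤ Real.exp ((1:ℕ) * (h' - h + 2 * δ)) := by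
        apply Real.one_le_exp; push_cast; linarith
      have h2 : f 1 * Real.exp (L 1) ≤ A := by
        have : f 1 * Real.exp (L 1) ≤ |f 1| * Real.exp (L 1) := by gcongr; exact le_abs_self _
        have : 0 < C * Real.exp K := by positivity
        linarith
      push_cast at *
      nlinarith
    | succ n hn ih =>
      have h1 : f (n+1) * Real.exp (L (n+1)) ≤ f n * Real.exp (L n) + g n * Real.exp (L n) := by
        rw [hLs n]
        have := mul_le_mul_of_nonneg_right (hrec n hn) (Real.exp_pos (L (n+1))).le
        linarith
      have h2 : g n * Real.exp (L n) ≤ C * Real.exp K * Real.exp (n * (h' - h + 2 * δ)) := by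
        have hl : L n ≤ K + n * δ + n * h' := by
          have := (abs_le.1 (hK n)).2; linarith
        calc g n * Real.exp (L n) ≤ (C * Real.exp (-(n * (h - δ)))) * Real.exp (K + n * δ + n * h') := by
              gcongr
              exact hgC n
          _ = C * Real.exp K * Real.exp (n * (h' - h + 2 * δ)) := by
              rw [mul_assoc, mul_assoc, ← Real.exp_add, ← Real.exp_add]
              congr 2; ring
      have h3 : C * Real.exp K ≤ A := by
        have : 0 ≤ |f 1| * Real.exp (L 1) := by positivity
        linarith
      have h4 : Real.exp (n * (h' - h + 2 * δ)) ≤ Real.exp ((n+1 : ℕ) * (h' - h + 2 * δ)) := by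
        apply Real.exp_le_exp.2
        push_cast
        nlinarith
      calc f (n+1) * Real.exp (L (n+1))
          ≤ A * n * Real.exp (n * (h' - h + 2 * δ)) + A * Real.exp (n * (h' - h + 2 * δ)) := by
            have : C * Real.exp K * Real.exp (n * (h' - h + 2 * δ)) ≤ A * Real.exp (n * (h' - h + 2 * δ)) := by
              gcongr
            linarith
        _ = A * (n+1 : ℕ) * Real.exp (n * (h' - h + 2 * δ)) := by push_cast; ring
        _ ≤ _ := by gcongr
  refine ⟨|f 0| + A * (1 + 1/δ) * Real.exp K, by positivity, fun n => ?_⟩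
  rcases Nat.eq_zero_or_pos n with rfl | hn
  · have : 0 < A * (1 + 1/δ) * Real.exp K := by positivity
    simp
    simp at this
    linarith [le_abs_self (f 0)]
  · have h1 := hind n hn
    have hl : n * h' - K - n * δ ≤ L n := by
      have := (abs_le.1 (hK n)).1; linarith
    have h2 : f n ≤ A * n * Real.exp (n * (h' - h + 2 * δ)) * Real.exp (- L n) := by
      have := mul_le_mul_of_nonneg_right h1 (Real.exp_pos (- L n)).le
      rwa [mul_assoc, ← Real.exp_add, add_neg_cancel, Real.exp_zero, mul_one] at this
    have h3 : (n:ℝ) ≤ (1 + 1/δ) * Real.exp (n * δ) := by linarith [nat_le_exp δ hδ0 n]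
    calc f n ≤ A * n * Real.exp (n * (h' - h + 2 * δ)) * Real.exp (- L n) := h2
      _ ≤ A * ((1 + 1/δ) * Real.exp (n * δ)) * Real.exp (n * (h' - h + 2 * δ)) *
          Real.exp (-(n * h' - K - n * δ)) := by
          gcongr
      _ = A * (1 + 1/δ) * Real.exp K * Real.exp (-(n * (h - ε))) := by
          have : Real.exp (n * δ) * Real.exp (n * (h' - h + 2 * δ)) * Real.exp (-(n * h' - K - n * δ))
            = Real.exp K * Real.exp (-(n * (h - ε))) := by
            rw [← Real.exp_add, ← Real.exp_add, ← Real.exp_add]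
            congr 1; rw [hδ]; ring
          linear_combination (A * (1 + 1/δ)) * this
      _ ≤ _ := by
          gcongr
          linarith [abs_nonneg (f 0)]

lemma UB_zero (h : ℝ) : UB (fun _ => 0) h := fun ε _ => ⟨1, one_pos, fun n => by positivity⟩

lemma UB_add {f g : ℕ → ℝ} {h : ℝ} (hf : UB f h) (hg : UB g h) : UB (fun n => f n + g n) h := by
  intro ε hε
  obtain ⟨C, hC, h1⟩ := hf ε hε
  obtain ⟨C', hC', h2⟩ := hg ε hε
  refine ⟨C + C', by positivity, fun n => ?_⟩
  rw [add_mul]; exact add_le_add (h1 n) (h2 n)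

lemma UB_sum {ι : Type*} (s : Finset ι) {f : ι → ℕ → ℝ} {h : ℝ} (hf : ∀ i ∈ s, UB (f i) h) :
    UB (fun n => ∑ i ∈ s, f i n) h := by
  classical
  induction s using Finset.induction_on with
  | empty => simpa using UB_zero h
  | insert a s ha ih =>
    simp_rw [Finset.sum_insert ha]
    exact UB_add (hf a (by simp)) (ih fun i hi => hf i (by simp [hi]))

variable (p : ℕ → ℝ) (s : ℕ) (x : ℕ → Fin D)

lemma Ppart_nonneg (hD : 2 ≤ D) (hp : ∀ n, p n ∈ Set.Ioo (0:ℝ) 1) (n : ℕ) (k : ℤ) :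
    0 ≤ PpartT D p s x n k := by
  induction n generalizing k with
  | zero => simp [PpartT]
  | succ n ih =>
    cases n with
    | zero =>
      have h1 := (hp 0).1.le
      have h2 : 0 ≤ 1 - p 0 := by linarith [(hp 0).2]
      have h3 := fun k => (Bpred_pos hD [] (x 0) k).le
      rw [PpartT]
      split_ifs
      · exact mul_nonneg h1 (h3 _)
      · exact mul_nonneg h2 (h3 _)
      · exact le_rfl
    | succ n =>
      rw [PpartT]
      have h1 := (hp (n+1)).1.le
      have h2 : 0 ≤ 1 - p (n+1) := by linarith [(hp (n+1)).2]
      split_ifs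
      · exact mul_nonneg (add_nonneg (mul_nonneg h1 (ih _)) (mul_nonneg h2 (ih _)))
          (Bpred_pos hD _ _ _).le
      · exact le_rfl

lemma Ppart_neg (n : ℕ) (k : ℤ) (hk : k < -1) : PpartT D p s x n k = 0 := by
  rcases n with _ | _ | n
  · simp [PpartT]
  · rw [PpartT, if_neg (by omega), if_neg (by omega)]
  · rw [PpartT, if_neg (by omega)]

lemma Pbul_nonneg (hD : 2 ≤ D) (hp : ∀ n, p n ∈ Set.Ioo (0:ℝ) 1) (n : ℕ) :
    0 ≤ PbulT D p s x n := by
  induction n with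
  | zero => simp [PbulT]
  | succ n ih =>
    rw [PbulT]
    have h2 : 0 ≤ 1 - p n := by linarith [(hp n).2]
    split_ifs
    · exact mul_nonneg (add_nonneg ih (mul_nonneg h2 (Ppart_nonneg p s x hD hp _ _)))
          (Bpred_pos hD _ _ _).le
    · exact le_rfl

lemma Ppart_rec (hD : 2 ≤ D) (hp : ∀ n, p n ∈ Set.Ioo (0:ℝ) 1) (n : ℕ) (hn : 1 ≤ n) (j : ℕ) :
    PpartT D p s x (n+1) ((j:ℤ) - 1) ≤
      (PpartT D p s x n ((j:ℤ)-1) + PpartT D p s x n ((j:ℤ) - 1 - 1)) *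
        Bpred D (pref x n) (x n) j := by
  obtain ⟨n, rfl⟩ : ∃ m, n = m + 1 := ⟨n-1, by omega⟩
  have a1 := Ppart_nonneg p s x hD hp (n+1) ((j:ℤ)-1)
  have a2 := Ppart_nonneg p s x hD hp (n+1) ((j:ℤ)-1-1)
  have h1 := hp (n+1)
  rw [PpartT]
  split_ifs
  · rw [show ((j:ℤ) - 1 + 1).toNat = j by simp]
    refine mul_le_mul_of_nonneg_right ?_ (Bpred_pos hD _ _ _).le
    nlinarith [h1.1, h1.2]
  · exact mul_nonneg (add_nonneg a1 a2) (Bpred_pos hD _ _ _).le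

lemma Ps_upper (hD : 2 ≤ D) (hp : ∀ n, p n ∈ Set.Ioo (0:ℝ) 1) (h : ℕ → ℝ) (hanti : Antitone h)
    (hlim : ∀ k, Tendsto (fun n : ℕ => (∑ m ∈ Finset.range n,
      -Real.log (Bpred D (pref x m) (x m) k)) / n) atTop (𝓝 (h k))) :
    UB (fun n => PsT D p s x n) (h (s+1)) := by
  have hpart : ∀ j, j ≤ s + 1 → UB (fun n => PpartT D p s x n ((j:ℤ)-1)) (h (s+1)) := by
    intro j
    induction j with
    | zero =>
      intro _
      refine UB_step _ _ (fun n => PpartT D p s x n (((0:ℕ):ℤ) - 1 - 1)) _ _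
        (fun n => Bpred_pos hD (pref x n) (x n) 0)
        (fun n => Ppart_nonneg p s x hD hp _ _) (fun n hn => Ppart_rec p s x hD hp n hn 0)
        (hlim 0) (hanti (Nat.zero_le _)) ?_
      have : (fun n => PpartT D p s x n (((0:ℕ):ℤ) - 1 - 1)) = fun _ => 0 := by
        funext n; exact Ppart_neg p s x n _ (by norm_num)
      rw [this]; exact UB_zero _
    | succ j ih =>
      intro hj
      refine UB_step _ _ (fun n => PpartT D p s x n (((j+1:ℕ):ℤ) - 1 - 1)) _ _
        (fun n => Bpred_pos hD (pref x n) (x n) (j+1))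
        (fun n => Ppart_nonneg p s x hD hp _ _) (fun n hn => Ppart_rec p s x hD hp n hn (j+1))
        (hlim (j+1)) (hanti hj) ?_
      have := ih (by omega)
      rw [show ((j+1:ℕ):ℤ) - 1 - 1 = (j:ℤ) - 1 by push_cast; ring]
      exact this
  have hs := hpart (s+1) le_rfl
  have hbul : UB (fun n => PbulT D p s x n) (h (s+1)) := by
    refine UB_step _ _ (fun n => PpartT D p s x n (s:ℤ)) _ _
        (fun n => Bpred_pos hD (pref x n) (x n) (s+1))
        (fun n => Ppart_nonneg p s x hD hp _ _) (fun n hn => ?_)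
        (hlim (s+1)) le_rfl ?_
    · have a1 := Pbul_nonneg p s x hD hp n
      have a2 := Ppart_nonneg p s x hD hp n s
      have h1 := hp n
      rw [PbulT]
      split_ifs
      · refine mul_le_mul_of_nonneg_right ?_ (Bpred_pos hD _ _ _).le
        nlinarith [h1.1, h1.2]
      · exact mul_nonneg (add_nonneg a1 a2) (Bpred_pos hD _ _ _).le
    · rw [show ((s+1:ℕ):ℤ) - 1 = (s:ℤ) by push_cast; ring] at hs
      exact hs
  unfold PsT
  exact UB_add (UB_sum _ fun j hj => hpart j (by have := Finset.mem_range.1 hj; omega)) hbul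

lemma Ppart_diag (hD : 2 ≤ D) (hp : ∀ n, p n ∈ Set.Ioo (0:ℝ) 1) (j : ℕ) (hj : j ≤ s) :
    0 < PpartT D p s x (j+1) j := by
  induction j with
  | zero =>
    rw [PpartT, if_neg (by norm_num), if_pos (by norm_num)]
    exact mul_pos (by linarith [(hp 0).2]) (Bpred_pos hD _ _ _)
  | succ j ih =>
    rw [PpartT, if_pos]
    · refine mul_pos ?_ (Bpred_pos hD _ _ _)
      have := ih (by omega)
      rw [show ((j+1:ℕ):ℤ) - 1 = (j:ℤ) by push_cast; ring]
      have h1 := Ppart_nonneg p s x hD hp (j+1) ((j+1:ℕ):ℤ)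
      have h2 := hp (j+1)
      have h3 := mul_pos (sub_pos.2 h2.2) this
      have h4 := mul_nonneg h2.1.le h1
      linarith
    · push_cast; omega

lemma Ppart_low (hD : 2 ≤ D) (hp : ∀ n, p n ∈ Set.Ioo (0:ℝ) 1) (n : ℕ) (hn : s + 1 ≤ n) :
    PpartT D p s x (s+1) s * ((∏ i ∈ Finset.range n, p i) *
      ∏ m ∈ Finset.range n, Bpred D (pref x m) (x m) (s+1)) ≤ PpartT D p s x n s := by
  induction n, hn using Nat.le_induction with
  | base =>
    have h1 : ∏ i ∈ Finset.range (s+1), p i ≤ 1 :=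
      Finset.prod_le_one (fun i _ => (hp i).1.le) (fun i _ => (hp i).2.le)
    have h2 : ∏ m ∈ Finset.range (s+1), Bpred D (pref x m) (x m) (s+1) ≤ 1 :=
      Finset.prod_le_one (fun i _ => (Bpred_pos hD _ _ _).le) (fun i _ => Bpred_le_one hD _ _ _)
    have h3 : 0 ≤ ∏ m ∈ Finset.range (s+1), Bpred D (pref x m) (x m) (s+1) :=
      Finset.prod_nonneg (fun i _ => (Bpred_pos hD _ _ _).le)
    exact mul_le_of_le_one_right (Ppart_nonneg p s x hD hp _ _) (mul_le_one₀ h1 h3 h2)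
  | succ n hn ih =>
    obtain ⟨n, rfl⟩ : ∃ m, n = m + 1 := ⟨n-1, by omega⟩
    rw [Finset.prod_range_succ, Finset.prod_range_succ _ (n+1)]
    have hB := (Bpred_pos hD (pref x (n+1)) (x (n+1)) (s+1)).le
    have h1 := hp (n+1)
    conv_rhs => rw [PpartT]
    rw [if_pos (by omega), show ((s:ℤ)+1).toNat = s+1 by omega]
    have h2 := Ppart_nonneg p s x hD hp (n+1) ((s:ℤ) - 1)
    have h3 := mul_nonneg (sub_pos.2 h1.2).le h2
    have h4 := mul_le_mul_of_nonneg_left ih h1.1.le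
    have h5 := mul_le_mul_of_nonneg_right h4 hB
    have h6 := mul_nonneg h3 hB
    linarith

lemma Ps_low (hD : 2 ≤ D) (hp : ∀ n, p n ∈ Set.Ioo (0:ℝ) 1) (n : ℕ) :
    PpartT D p s x n s ≤ PsT D p s x n := by
  unfold PsT
  have h1 := Finset.single_le_sum (f := fun kk : ℕ => PpartT D p s x n ((kk:ℤ)-1))
    (fun _ _ => Ppart_nonneg p s x hD hp _ _) (Finset.mem_range.2 (by omega : s + 1 < s + 2))
  have h2 := Pbul_nonneg p s x hD hp n
  rw [show ((s+1:ℕ):ℤ) - 1 = (s:ℤ) by push_cast; ring] at h1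
  linarith

lemma Ps_lim (hD : 2 ≤ D) (hp : ∀ n, p n ∈ Set.Ioo (0:ℝ) 1)
    (hprod : ∃ L, 0 < L ∧ Tendsto (fun N : ℕ => ∏ i ∈ Finset.range N, p i) atTop (𝓝 L))
    (h : ℕ → ℝ) (hanti : Antitone h)
    (hlim : ∀ k, Tendsto (fun n : ℕ => (∑ m ∈ Finset.range n,
      -Real.log (Bpred D (pref x m) (x m) k)) / n) atTop (𝓝 (h k))) :
    Tendsto (fun n : ℕ => -Real.log (PsT D p s x n) / n) atTop (𝓝 (h (s+1))) := by
  obtain ⟨P, hP, hPt⟩ := hprod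
  set c := PpartT D p s x (s+1) s with hc
  have hc0 : 0 < c := Ppart_diag p s x hD hp s le_rfl
  have hpp : ∀ n, 0 < ∏ i ∈ Finset.range n, p i := fun n => Finset.prod_pos fun i _ => (hp i).1
  have hBB : ∀ n, 0 < ∏ m ∈ Finset.range n, Bpred D (pref x m) (x m) (s+1) :=
    fun n => Finset.prod_pos fun i _ => Bpred_pos hD _ _ _
  have hPs : ∀ n, s + 1 ≤ n → c * ((∏ i ∈ Finset.range n, p i) *
      ∏ m ∈ Finset.range n, Bpred D (pref x m) (x m) (s+1)) ≤ PsT D p s x n := fun n hn =>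
    (Ppart_low p s x hD hp n hn).trans (Ps_low p s x hD hp n)
  have hPs0 : ∀ n, s + 1 ≤ n → 0 < PsT D p s x n := fun n hn =>
    lt_of_lt_of_le (mul_pos hc0 (mul_pos (hpp n) (hBB n))) (hPs n hn)
  have hone : Tendsto (fun n : ℕ => ((n:ℝ))⁻¹) atTop (𝓝 0) := tendsto_inv_atTop_nhds_zero_nat
  have hup : Tendsto (fun n : ℕ => (-Real.log c + -Real.log (∏ i ∈ Finset.range n, p i)) * (n:ℝ)⁻¹
      + (∑ m ∈ Finset.range n, -Real.log (Bpred D (pref x m) (x m) (s+1))) / n) atTop (𝓝 (h (s+1))) := by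
    have h1 := (((hPt.log hP.ne').neg.const_add (-Real.log c)).mul hone).add (hlim (s+1))
    simpa using h1
  have hupper : ∀ᶠ n : ℕ in atTop, -Real.log (PsT D p s x n) / n ≤
      (-Real.log c + -Real.log (∏ i ∈ Finset.range n, p i)) * (n:ℝ)⁻¹
      + (∑ m ∈ Finset.range n, -Real.log (Bpred D (pref x m) (x m) (s+1))) / n := by
    filter_upwards [eventually_ge_atTop (s+1)] with n hn
    have h1 := Real.log_le_log (mul_pos hc0 (mul_pos (hpp n) (hBB n))) (hPs n hn)
    rw [Real.log_mul hc0.ne' (mul_pos (hpp n) (hBB n)).ne', Real.log_mul (hpp n).ne' (hBB n).ne',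
      Real.log_prod (fun i _ => (Bpred_pos hD _ _ _).ne')] at h1
    rw [← div_eq_mul_inv, ← add_div, Finset.sum_neg_distrib]
    refine div_le_div_of_nonneg_right ?_ (Nat.cast_nonneg _)
    linarith
  have hub := Ps_upper p s x hD hp h hanti hlim
  rw [Metric.tendsto_nhds]
  intro ε hε
  obtain ⟨C, hC, hCn⟩ := hub (ε/2) (by positivity)
  have hC0 : Tendsto (fun n : ℕ => Real.log C / (n:ℝ)) atTop (𝓝 0) :=
    tendsto_const_div_atTop_nhds_zero_nat _
  filter_upwards [hupper, Metric.tendsto_nhds.1 hup ε hε, eventually_ge_atTop (s+1),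
    hC0.eventually (gt_mem_nhds (half_pos hε))] with n h1 h2 h3 h4
  have hn0 : (0:ℝ) < n := by exact_mod_cast (by omega : 0 < n)
  have h5 := Real.log_le_log (hPs0 n h3) (hCn n)
  rw [Real.log_mul hC.ne' (Real.exp_pos _).ne', Real.log_exp] at h5
  rw [Real.dist_eq, abs_lt] at h2 ⊢
  constructor
  · rw [div_lt_iff₀ hn0] at h4
    have : h (s+1) - ε < -Real.log (PsT D p s x n) / n := by
      rw [lt_div_iff₀ hn0]
      nlinarith
    linarith
  · linarith
end Sw

/-- Fix a depth parameter `s ≥ 0` and let `P_s` denote the depth-`s` truncated switch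
distribution. Then for every stationary ergodic probability measure `Q` on
`Ω = {1,...,D}^ℤ`, `Q`-almost surely
`lim (1/n)·(−log P_s(X_1^n)) = lim (1/n)·(−log B(X_{s+1}^n|X_1^s, s))
  = E_Q[−log Q(X_{s+1}|X_1^s)]`,
where `B(x_{s+1}^n|x_1^s, s) = ∏_{i=s+1}^n B(x_i|x_1^{i-1}, s)` and
`Q(X_{s+1}|X_1^s) = Q(X_1^{s+1})/Q(X_1^s)` evaluated at the sample path. -/
theorem truncated_switch_entropy_limit
    (D : ℕ) (hD : 2 ≤ D) (p : ℕ → ℝ) (hp : ∀ n, p n ∈ Set.Ioo (0 : ℝ) 1)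
    (hprod : ∃ L, 0 < L ∧ Tendsto (fun N : ℕ => ∏ i ∈ Finset.range N, p i) atTop (𝓝 L))
    (s : ℕ)
    (Q : Measure (Omega D)) [IsProbabilityMeasure Q]
    (hQerg : Ergodic (shiftT D) Q) :
    ∀ᵐ ω ∂Q,
      Tendsto (fun n : ℕ => -Real.log (PsT D p s (path D ω) n) / n) atTop
        (𝓝 (∫ ω', -Real.log
          (Qstr D Q (path D ω') (s + 1) / Qstr D Q (path D ω') s) ∂Q)) ∧
      Tendsto (fun n : ℕ =>
          -Real.log (∏ i ∈ Finset.Icc (s + 1) n,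
            Bpred D (pref (path D ω) (i - 1)) (path D ω (i - 1)) (s + 1)) / n) atTop
        (𝓝 (∫ ω', -Real.log
          (Qstr D Q (path D ω') (s + 1) / Qstr D Q (path D ω') s) ∂Q)) := by
  have hT := hQerg.toMeasurePreserving
  have hint : (∫ ω', -Real.log
      (Qstr D Q (path D ω') (s + 1) / Qstr D Q (path D ω') s) ∂Q) = hh Q (s+1) := by
    unfold hh
    refine integral_congr_ae (Filter.Eventually.of_forall fun ω => ?_)
    simp only [qq, qF, Qstr_eq, pref_dropLast]
    rfl
  rw [hint]
  have hB : ∀ᵐ ω ∂Q, ∀ k, Tendsto (fun n : ℕ => (∑ m ∈ Finset.range n,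
      -Real.log (Bpred D (pref (path D ω) m) (path D ω m) k)) / n) atTop (𝓝 (hh Q k)) :=
    ae_all_iff.2 fun k => Blim hD Q hQerg k
  filter_upwards [hB] with ω hω
  refine ⟨Ps_lim p s _ hD hp hprod (hh Q) (hh_anti hD Q hT) hω, ?_⟩
  have h1 := hω (s+1)
  have h2 : Tendsto (fun n : ℕ => (∑ m ∈ Finset.range s,
      -Real.log (Bpred D (pref (path D ω) m) (path D ω m) (s+1))) / (n:ℝ)) atTop (𝓝 0) :=
    tendsto_const_div_atTop_nhds_zero_nat _
  have h3 := h1.sub h2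
  rw [sub_zero] at h3
  refine h3.congr' ?_
  filter_upwards [eventually_ge_atTop s] with n hn
  rw [← sub_div]
  congr 1
  rw [Real.log_prod (fun i _ => (Bpred_pos hD _ _ _).ne'), ← Finset.sum_neg_distrib]
  rw [← Finset.sum_Ico_eq_sub _ hn]
  refine Finset.sum_bij (fun m _ => m + 1) ?_ ?_ ?_ ?_
  · intro a ha
    rw [Finset.mem_Ico] at ha
    rw [Finset.mem_Icc]
    omega
  · intro a _ b _ hab
    omega
  · intro b hb
    rw [Finset.mem_Icc] at hb
    exact ⟨b - 1, by rw [Finset.mem_Ico]; omega, by omega⟩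
  · intro a _
    simp
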